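/- Fix β > 0, a real α > 2, p ∈ {1, 2}, a constant C_J ∈ (0, ∞), and an even coupling function J : ℤ \ {0} → ℝ with |J(k)| ≤ C_J·|k|^{−α} for all k ≠ 0. Then there is no probability measure μ on Ω = ℤ^ℤ (with the product σ-algebra) satisfying all three of the following: (i) shift-invariance: μ is invariant under the spatial shift S; (ii) localisation: ∫ |φ_0| dμ(φ) < ∞; (iii) the Gibbs (DLR) property: for every finite set Λ ⊂ ℤ there is a set of configurations ω of full μ-measure such that for every ψ : Λ → ℤ the series h_Λ(ψ, ω) := Σ_{{i,j}⊆Λ, i≠j} J(i−j)·|ψ_i − ψ_j|^p + Σ_{i∈Λ} Σ_{j∉Λ} J(i−j)·|ψ_i − ω_j|^p converges absolutely, the partition function Z_Λ(ω) := Σ_{ψ∈ℤ^Λ} exp(−β·h_Λ(ψ, ω)) is finite, and for every fixed φ̂ ∈ ℤ^Λ the conditional expectation under μ of the indicator of {φ : φ agrees with φ̂ on Λ}, given the σ-algebra F_{Λᶜ} generated by the coordinates outside Λ, is μ-almost everywhere equal to ω ↦ exp(−β·h_Λ(φ̂, ω))/Z_Λ(ω). -/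

import Mathlib

/-! The proof compares a Gibbs measure with its image under raising all heights in `[0, n)` by one.

The surgery only affects the interactions across the boundary of the interval. For `p ∈ {1, 2}`
each of them changes by at most `|J(i - j)| (2 + 2 |φ_i| + 2 |φ_j|)`, and at most `|d|` sites of an
interval have their partner at displacement `d` outside of it. Hence the mean of the total cost is at
most a constant times `∑_d |d| |J(d)| · E(1 + 2 |φ_0|)`, which is finite and independent of `n` because
`α > 2` (`lintegral_boundaryCost_le`). By the DLR equation, the surgery therefore distorts
probabilities by a factor bounded uniformly in `n`, away from an event of small probability
(`IsGibbs.exp_mul_measure_le`).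

On the other hand, the spatial frequencies of `{φ_i ≥ v + 1}` and `{φ_i ≥ v}` converge along a
subsequence of scales, by the mean ergodic theorem, to limits `F ≤ F'` with means
`μ(φ_0 ≥ v + 1)` and `μ(φ_0 ≥ v)`. Choosing `v` with `μ(φ_0 = v) > 0`, there is a number `b` such
that `B = {F < b < F'}` has positive probability (`exists_separated_phases`). The limits do not depend
on finitely many heights, so `B` is invariant under the surgery up to null sets
(`IsGibbs.freqLimit_addOne`).

Restricting to `B` takes the place of an ergodic decomposition. On `B`, at a large scale `n`, the
frequency at level `v + 1` is typically below `b`. The surgery on `[0, n)` turns it into the frequency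
at level `v`, which is below `b` only on a part of `B` of vanishing probability. This contradicts the
bounded distortion.
-/

open MeasureTheory

/-- The configuration space `Ω = ℤ^ℤ`, carrying the product σ-algebra. -/
abbrev Conf : Type := ℤ → ℤ

/-- The spatial shift `S(φ)_i = φ_{i+1}`. -/
def spatialShift : Conf → Conf := fun φ i => φ (i + 1)

/-- The inner part of the Hamiltonian in the finite volume `Λ`:
`Σ_{{i,j} ⊆ Λ, i ≠ j} J(i-j) |ψ_i - ψ_j|^p` (each unordered pair counted once). -/
noncomputable def innerH (J : ℤ → ℝ) (p : ℝ) (Λ : Finset ℤ) (ψ : Λ → ℤ) : ℝ :=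
  ∑ i : Λ, ∑ j : Λ, if (i : ℤ) < (j : ℤ) then
    J ((i : ℤ) - (j : ℤ)) * |(ψ i : ℝ) - (ψ j : ℝ)| ^ p else 0

/-- The boundary part of the Hamiltonian:
`Σ_{i ∈ Λ} Σ_{j ∉ Λ} J(i-j) |ψ_i - ω_j|^p`. -/
noncomputable def crossH (J : ℤ → ℝ) (p : ℝ) (Λ : Finset ℤ) (ψ : Λ → ℤ) (ω : Conf) : ℝ :=
  ∑ i : Λ, ∑' j : {j : ℤ // j ∉ Λ}, J ((i : ℤ) - (j : ℤ)) * |(ψ i : ℝ) - (ω (j : ℤ) : ℝ)| ^ p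

/-- The finite-volume Hamiltonian `h_Λ(ψ, ω)` with boundary condition `ω`. -/
noncomputable def hamH (J : ℤ → ℝ) (p : ℝ) (Λ : Finset ℤ) (ψ : Λ → ℤ) (ω : Conf) : ℝ :=
  innerH J p Λ ψ + crossH J p Λ ψ ω

/-- The partition function `Z_Λ(ω) = Σ_{ψ ∈ ℤ^Λ} exp(-β h_Λ(ψ, ω))`. -/
noncomputable def partZ (β : ℝ) (J : ℤ → ℝ) (p : ℝ) (Λ : Finset ℤ) (ω : Conf) : ℝ :=
  ∑' ψ : Λ → ℤ, Real.exp (-β * hamH J p Λ ψ ω)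

/-- The σ-algebra `F_{Λᶜ}` generated by the coordinates outside `Λ`. -/
def outsideSigma (Λ : Finset ℤ) : MeasurableSpace Conf :=
  MeasurableSpace.comap (fun (φ : Conf) (j : {j : ℤ // j ∉ Λ}) => φ (j : ℤ)) inferInstance

/-- The Gibbs (DLR) property for the Hamiltonian with couplings `J`, potential `|x|^p` and
inverse temperature `β`: for every finite `Λ ⊂ ℤ`, almost every boundary condition `ω` makes
all the series `h_Λ(ψ, ω)` absolutely convergent and the partition function finite, and for
every `ψ ∈ ℤ^Λ` the conditional probability of `{φ agrees with ψ on Λ}` given `F_{Λᶜ}` is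
a.e. equal to `ω ↦ exp(-β h_Λ(ψ, ω)) / Z_Λ(ω)`. -/
def IsGibbs (β : ℝ) (J : ℤ → ℝ) (p : ℝ) (μ : Measure Conf) : Prop :=
  ∀ Λ : Finset ℤ,
    (∀ᵐ ω ∂μ,
      (∀ ψ : Λ → ℤ, ∀ i : Λ,
        Summable (fun j : {j : ℤ // j ∉ Λ} =>
          J ((i : ℤ) - (j : ℤ)) * |(ψ i : ℝ) - (ω (j : ℤ) : ℝ)| ^ p)) ∧
      Summable (fun ψ : Λ → ℤ => Real.exp (-β * hamH J p Λ ψ ω))) ∧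
    ∀ ψ : Λ → ℤ,
      μ[Set.indicator {φ : Conf | ∀ i : Λ, φ (i : ℤ) = ψ i} (fun _ => (1 : ℝ)) | outsideSigma Λ]
        =ᵐ[μ] fun ω => Real.exp (-β * hamH J p Λ ψ ω) / partZ β J p Λ ω

open Filter Topology ENNReal

/-! ### Convergence of empirical frequencies -/

/-- The mean ergodic theorem for the Koopman operator on `L²`, read as convergence in measure. -/
theorem tendstoInMeasure_birkhoffAverage {X : Type*} [MeasurableSpace X] {μ : Measure X}
    {S : X → X} (hS : MeasurePreserving S μ μ) {f : X → ℝ} (hf : MemLp f 2 μ) :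
    ∃ F : X → ℝ, Measurable F ∧ TendstoInMeasure μ (birkhoffAverage ℝ S f) atTop F := by
  set U : Lp ℝ 2 μ →ₗᵢ[ℝ] Lp ℝ 2 μ := Lp.compMeasurePreservingₗᵢ ℝ S hS with hU
  have hlim := U.toContinuousLinearMap.tendsto_birkhoffAverage_orthogonalProjection
    U.norm_toContinuousLinearMap_le (hf.toLp f)
  set P : Lp ℝ 2 μ := _
  change Tendsto _ _ (𝓝 P) at hlim
  obtain ⟨F, hFm, hF⟩ := (Lp.aestronglyMeasurable P)
  -- The Koopman operator acts on classes; up to null sets its orbits are those of `f`.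
  have hiter : ∀ k : ℕ, ((U.toContinuousLinearMap)^[k] (hf.toLp f) : X → ℝ) =ᵐ[μ] f ∘ S^[k] := by
    intro k
    induction k with
    | zero => simpa using hf.coeFn_toLp
    | succ k ih =>
      rw [Function.iterate_succ_apply', Function.iterate_succ, ← Function.comp_assoc]
      exact (Lp.coeFn_compMeasurePreserving _ hS).trans (hS.quasiMeasurePreserving.ae_eq_comp ih)
  have havg : ∀ n : ℕ, (birkhoffAverage ℝ U.toContinuousLinearMap id n (hf.toLp f) : Lp ℝ 2 μ)
      =ᵐ[μ] birkhoffAverage ℝ S f n := by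
    intro n
    have hsum : (birkhoffSum U.toContinuousLinearMap id n (hf.toLp f) : Lp ℝ 2 μ)
        =ᵐ[μ] birkhoffSum S f n := by
      induction n with
      | zero => simpa [birkhoffSum_zero] using Lp.coeFn_zero ℝ 2 μ
      | succ n ih =>
        rw [birkhoffSum_succ]
        filter_upwards [Lp.coeFn_add (birkhoffSum U.toContinuousLinearMap id n (hf.toLp f))
          (id (U.toContinuousLinearMap^[n] (hf.toLp f))), ih, hiter n] with x h1 h2 h3
        rw [h1, Pi.add_apply, h2, birkhoffSum_succ, id, h3, Function.comp_apply]
    filter_upwards [Lp.coeFn_smul (n : ℝ)⁻¹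
      (birkhoffSum U.toContinuousLinearMap id n (hf.toLp f)), hsum] with x h1 h2
    simp only [birkhoffAverage]
    rw [h1, Pi.smul_apply, h2]
  exact ⟨F, hFm.measurable, (tendstoInMeasure_of_tendsto_Lp hlim).congr havg hF⟩

/-- The fraction of sites in `{0, …, N - 1}` at which the height is at least `m`
(equal to `0` when `N = 0`). -/
noncomputable def freq (m : ℤ) (N : ℕ) (φ : Conf) : ℝ :=
  (N : ℝ)⁻¹ * ∑ k ∈ Finset.range N, if m ≤ φ k then (1 : ℝ) else 0

theorem measurable_freq (m : ℤ) (N : ℕ) : Measurable (freq m N) := by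
  refine Measurable.const_mul (Finset.measurable_fun_sum _ fun k _ => ?_) _
  exact Measurable.ite (measurableSet_le measurable_const (measurable_pi_apply _))
    measurable_const measurable_const

theorem abs_freq_le (m : ℤ) (N : ℕ) (φ : Conf) : |freq m N φ| ≤ 1 := by
  have h0 : 0 ≤ ∑ k ∈ Finset.range N, if m ≤ φ k then (1 : ℝ) else 0 :=
    Finset.sum_nonneg fun k _ => by split_ifs <;> norm_num
  have h1 : ∑ k ∈ Finset.range N, (if m ≤ φ k then (1 : ℝ) else 0) ≤ N := by
    refine (Finset.sum_le_card_nsmul _ _ 1 fun k _ => by split_ifs <;> norm_num).trans (by simp)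
  unfold freq
  rw [abs_of_nonneg (by positivity)]
  exact (mul_le_mul_of_nonneg_left h1 (by positivity)).trans (inv_mul_le_one)

theorem measurable_spatialShift : Measurable spatialShift :=
  measurable_pi_lambda _ fun _ => measurable_pi_apply _

theorem spatialShift_iterate (k : ℕ) (φ : Conf) (i : ℤ) :
    (spatialShift^[k] φ) i = φ (i + k) := by
  induction k generalizing i with
  | zero => simp
  | succ k ih =>
    rw [Function.iterate_succ_apply', spatialShift, ih]
    congr 1; push_cast; ring

/-- Under a shift-invariant measure all coordinates, including those at negative sites, have the
law of `φ 0`. -/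
theorem lintegral_coord {μ : Measure Conf} (hS : μ.map spatialShift = μ) {g : ℤ → ℝ≥0∞}
    (hg : Measurable g) (j : ℤ) : ∫⁻ φ, g (φ j) ∂μ = ∫⁻ φ, g (φ 0) ∂μ := by
  have step : ∀ j : ℤ, ∫⁻ φ, g (φ (j + 1)) ∂μ = ∫⁻ φ, g (φ j) ∂μ := by
    intro j
    conv_rhs => rw [← hS]
    exact (lintegral_map (hg.comp (measurable_pi_apply j)) measurable_spatialShift).symm
  induction j with
  | zero => rfl
  | succ j ih => rw [step, ih]
  | pred j ih => rw [← step, sub_add_cancel, ih]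

theorem integral_freq {μ : Measure Conf} [IsProbabilityMeasure μ] (hS : μ.map spatialShift = μ)
    (m : ℤ) {N : ℕ} (hN : N ≠ 0) : ∫ φ, freq m N φ ∂μ = μ.real {φ | m ≤ φ 0} := by
  have hms : ∀ j : ℤ, MeasurableSet {φ : Conf | m ≤ φ j} := fun j =>
    measurableSet_le measurable_const (measurable_pi_apply j)
  have h : ∀ j : ℤ, ∫ φ : Conf, (if m ≤ φ j then (1 : ℝ) else 0) ∂μ = μ.real {φ | m ≤ φ 0} := by
    intro j
    have h1 := lintegral_coord hS (g := fun x => if m ≤ x then 1 else 0) (by fun_prop) j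
    have h2 : ∀ j : ℤ, ∫⁻ φ : Conf, (if m ≤ φ j then (1 : ℝ≥0∞) else 0) ∂μ = μ {φ | m ≤ φ j} := by
      intro j
      rw [← lintegral_indicator_one (hms j)]
      exact lintegral_congr fun φ => by simp [Set.indicator]
    have h3 : ∫ φ : Conf, (if m ≤ φ j then (1 : ℝ) else 0) ∂μ = μ.real {φ | m ≤ φ j} := by
      rw [← integral_indicator_one (hms j)]
      exact integral_congr_ae (ae_of_all _ fun φ => by simp [Set.indicator])
    rw [h3, measureReal_def, ← h2, h1, h2, measureReal_def]
  unfold freq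
  rw [integral_const_mul, integral_finsetSum]
  · simp only [h, Finset.sum_const, Finset.card_range, nsmul_eq_mul]
    field_simp
  · intro k _
    refine Integrable.of_bound (Measurable.aestronglyMeasurable ?_) 1
      (ae_of_all _ fun φ => by split_ifs <;> simp)
    exact Measurable.ite (hms k) measurable_const measurable_const

/-- Along a common subsequence of scales, the frequencies at the two levels `m` and `m'` converge
almost surely. -/
theorem exists_freq_tendsto {μ : Measure Conf} [IsProbabilityMeasure μ]
    (hS : μ.map spatialShift = μ) (m m' : ℤ) :
    ∃ (N : ℕ → ℕ) (F F' : Conf → ℝ), StrictMono N ∧ Measurable F ∧ Measurable F' ∧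
      (∀ᵐ φ ∂μ, Tendsto (fun k => freq m (N k) φ) atTop (𝓝 (F φ))) ∧
      (∀ᵐ φ ∂μ, Tendsto (fun k => freq m' (N k) φ) atTop (𝓝 (F' φ))) := by
  have hmp : MeasurePreserving spatialShift μ μ := ⟨measurable_spatialShift, hS⟩
  have key : ∀ m : ℤ, ∃ F : Conf → ℝ, Measurable F ∧ TendstoInMeasure μ (freq m) atTop F := by
    intro m
    have hm : Measurable fun φ : Conf => if m ≤ φ 0 then (1 : ℝ) else 0 :=
      Measurable.ite (measurableSet_le measurable_const (measurable_pi_apply _))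
        measurable_const measurable_const
    obtain ⟨F, hF, h⟩ := tendstoInMeasure_birkhoffAverage hmp
      (MemLp.of_bound (p := 2) hm.aestronglyMeasurable 1
        (ae_of_all _ fun φ => by split_ifs <;> simp))
    refine ⟨F, hF, ?_⟩
    convert h using 1
    funext N φ
    simp [freq, birkhoffAverage, birkhoffSum, spatialShift_iterate]
  obtain ⟨F, hF, h⟩ := key m
  obtain ⟨F', hF', h'⟩ := key m'
  obtain ⟨N, hN, hN'⟩ := h.exists_seq_tendsto_ae
  obtain ⟨M, hM, hM'⟩ := (h'.comp hN.tendsto_atTop).exists_seq_tendsto_ae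
  refine ⟨N ∘ M, F, F', hN.comp hM, hF, hF', ?_, hM'⟩
  filter_upwards [hN'] with φ hφ using hφ.comp hM.tendsto_atTop

/-! ### The DLR equation and raising the heights in a finite volume -/

/-- The surgery raising all heights in the finite volume `Λ` by one. -/
def addOne (Λ : Finset ℤ) : Conf → Conf := fun φ i => if i ∈ Λ then φ i + 1 else φ i

/-- The configuration equal to `ψ` on `Λ` and to the boundary condition `ω` outside `Λ`. -/
def glue (Λ : Finset ℤ) (ψ : Λ → ℤ) : Conf → Conf :=
  fun ω i => if h : i ∈ Λ then ψ ⟨i, h⟩ else ω i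

/-- The cylinder event that `φ` agrees with `ψ` on `Λ`. -/
def cyl (Λ : Finset ℤ) (ψ : Λ → ℤ) : Set Conf := {φ | ∀ i : Λ, φ (i : ℤ) = ψ i}

theorem measurable_addOne (Λ : Finset ℤ) : Measurable (addOne Λ) := by
  refine measurable_pi_lambda _ fun i => ?_
  unfold addOne
  split_ifs
  · exact (measurable_pi_apply i).add_const 1
  · exact measurable_pi_apply i

theorem measurableSet_cyl (Λ : Finset ℤ) (ψ : Λ → ℤ) : MeasurableSet (cyl Λ ψ) := by
  rw [cyl, Set.ofPred_forall]
  exact MeasurableSet.iInter fun i => measurableSet_eq_fun (measurable_pi_apply _) measurable_const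

theorem outsideSigma_le (Λ : Finset ℤ) : outsideSigma Λ ≤ MeasurableSpace.pi :=
  (measurable_pi_lambda _ fun _ => measurable_pi_apply _).comap_le

theorem measurable_glue (Λ : Finset ℤ) (ψ : Λ → ℤ) :
    Measurable[outsideSigma Λ] (glue Λ ψ) := by
  have h : glue Λ ψ = (fun (η : {j : ℤ // j ∉ Λ} → ℤ) (i : ℤ) =>
      if h : i ∈ Λ then ψ ⟨i, h⟩ else η ⟨i, h⟩) ∘
      (fun (φ : Conf) (j : {j : ℤ // j ∉ Λ}) => φ (j : ℤ)) := by
    funext φ i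
    simp only [glue, Function.comp_apply]
  rw [h]
  refine Measurable.comp (measurable_pi_lambda _ fun i => ?_) (comap_measurable _)
  split_ifs
  · exact measurable_const
  · exact measurable_pi_apply _

theorem glue_eq_self {Λ : Finset ℤ} {ψ : Λ → ℤ} {φ : Conf} (h : φ ∈ cyl Λ ψ) :
    glue Λ ψ φ = φ := by
  funext i
  unfold glue
  split_ifs with hi
  · exact (h ⟨i, hi⟩).symm
  · rfl

/-- Raising a configuration that equals `ψ - 1` on `Λ` amounts to replacing its heights on `Λ`
by `ψ`. -/
theorem glue_eq_addOne {Λ : Finset ℤ} {ψ : Λ → ℤ} {φ : Conf}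
    (h : φ ∈ cyl Λ (fun i => ψ i - 1)) : glue Λ ψ φ = addOne Λ φ := by
  funext i
  unfold glue addOne
  split_ifs with hi
  · rw [h ⟨i, hi⟩]; ring
  · rfl

theorem measure_eq_tsum_cyl (μ : Measure Conf) (Λ : Finset ℤ) {E : Set Conf}
    (hE : MeasurableSet E) : μ E = ∑' ψ : Λ → ℤ, μ (E ∩ cyl Λ ψ) := by
  rw [← measure_iUnion]
  · congr 1
    ext φ
    simp only [Set.mem_iUnion, Set.mem_inter_iff]
    exact ⟨fun h => ⟨fun i => φ i, h, fun i => rfl⟩, fun ⟨_, h, _⟩ => h⟩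
  · intro ψ ψ' hne
    refine Set.disjoint_left.2 fun φ h h' => hne ?_
    funext i
    rw [← h.2 i, ← h'.2 i]
  · exact fun ψ => hE.inter (measurableSet_cyl Λ ψ)

/-- The conditional probability of `cyl Λ ψ` given the heights outside `Λ`. Working with this
version, rather than with the Gibbs weight to which it is a.e. equal, provides measurability with
respect to `outsideSigma Λ` for free. -/
noncomputable def cylProb (μ : Measure Conf) (Λ : Finset ℤ) (ψ : Λ → ℤ) : Conf → ℝ :=
  μ[(cyl Λ ψ).indicator (fun _ => (1 : ℝ)) | outsideSigma Λ]

theorem stronglyMeasurable_cylProb (μ : Measure Conf) (Λ : Finset ℤ) (ψ : Λ → ℤ) :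
    StronglyMeasurable[outsideSigma Λ] (cylProb μ Λ ψ) := stronglyMeasurable_condExp

theorem setIntegral_cylProb (μ : Measure Conf) [IsProbabilityMeasure μ] (Λ : Finset ℤ)
    (ψ : Λ → ℤ) {W : Set Conf} (hW : MeasurableSet[outsideSigma Λ] W) :
    ∫ ω in W, cylProb μ Λ ψ ω ∂μ = μ.real (W ∩ cyl Λ ψ) := by
  have hi : Integrable ((cyl Λ ψ).indicator (fun _ => (1 : ℝ))) μ :=
    (integrable_const 1).indicator (measurableSet_cyl Λ ψ)
  unfold cylProb
  rw [setIntegral_condExp (outsideSigma_le Λ) hi hW, setIntegral_indicator (measurableSet_cyl Λ ψ)]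
  simp

theorem IsGibbs.partZ_pos {β p : ℝ} {J : ℤ → ℝ} {μ : Measure Conf} (h : IsGibbs β J p μ)
    (Λ : Finset ℤ) : ∀ᵐ ω ∂μ, 0 < partZ β J p Λ ω := by
  filter_upwards [(h Λ).1] with ω hω
  exact hω.2.tsum_pos (fun _ => (Real.exp_pos _).le) 0 (Real.exp_pos _)

/-- Finite energy: all conditional probabilities of cylinders are positive, so `addOne Λ` is
nonsingular. -/
theorem IsGibbs.measure_preimage_addOne_eq_zero {β p : ℝ} {J : ℤ → ℝ} {μ : Measure Conf}
    [IsProbabilityMeasure μ] (h : IsGibbs β J p μ) (Λ : Finset ℤ) {E : Set Conf}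
    (hE : MeasurableSet E) (h0 : μ E = 0) : μ (addOne Λ ⁻¹' E) = 0 := by
  rw [measure_eq_tsum_cyl μ Λ (measurable_addOne Λ hE), ENNReal.tsum_eq_zero]
  intro ψ'
  set ψ : Λ → ℤ := fun i => ψ' i + 1 with hψ
  have hψ' : ψ' = fun i => ψ i - 1 := by funext i; simp [hψ]
  set W : Set Conf := glue Λ ψ ⁻¹' E
  have hW : MeasurableSet[outsideSigma Λ] W := measurable_glue Λ ψ hE
  have hsub : addOne Λ ⁻¹' E ∩ cyl Λ ψ' ⊆ W := by
    rintro φ ⟨h1, h2⟩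
    rw [hψ'] at h2
    simpa [W, glue_eq_addOne h2] using h1
  refine measure_mono_null hsub ?_
  have hWc : μ.real (W ∩ cyl Λ ψ) = 0 := by
    rw [measureReal_def, measure_mono_null _ h0, ENNReal.toReal_zero]
    rintro φ ⟨h1, h2⟩
    simpa [W, glue_eq_self h2] using h1
  have hpos : ∀ᵐ ω ∂μ, 0 < cylProb μ Λ ψ ω := by
    filter_upwards [h.partZ_pos Λ, (h Λ).2 ψ] with ω h1 h2
    exact lt_of_lt_of_eq (div_pos (Real.exp_pos _) h1) h2.symm
  rw [← setIntegral_cylProb μ Λ ψ hW] at hWc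
  by_contra hne
  refine hWc.not_gt ?_
  rw [setIntegral_pos_iff_support_of_nonneg_ae (ae_restrict_of_ae (hpos.mono fun _ h => h.le))
    integrable_condExp.integrableOn]
  refine (pos_iff_ne_zero.2 hne).trans_le (measure_mono_ae ?_)
  filter_upwards [hpos] with ω h1 h2 using ⟨h1.ne', h2⟩

/-- If lowering the heights in `Λ` by one costs energy at most `K` on `E`, then the preimage of `E`
under the raising map has probability at least `exp (-β K) μ(E)`. -/
theorem IsGibbs.exp_mul_measure_le {β p K : ℝ} {J : ℤ → ℝ} {μ : Measure Conf}
    [IsProbabilityMeasure μ] (hβ : 0 < β) (h : IsGibbs β J p μ) (Λ : Finset ℤ) {E : Set Conf}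
    (hE : MeasurableSet E)
    (hK : ∀ᵐ φ ∂μ, φ ∈ E →
      hamH J p Λ (fun i => φ i - 1) φ - hamH J p Λ (fun i => φ i) φ ≤ K) :
    ENNReal.ofReal (Real.exp (-β * K)) * μ E ≤ μ (addOne Λ ⁻¹' E) := by
  rw [measure_eq_tsum_cyl μ Λ (measurable_addOne Λ hE), measure_eq_tsum_cyl μ Λ hE,
    ← ENNReal.tsum_mul_left, ← (Equiv.subRight (1 : Λ → ℤ)).tsum_eq
      (fun ψ => μ (addOne Λ ⁻¹' E ∩ cyl Λ ψ))]
  refine ENNReal.tsum_le_tsum fun ψ => ?_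
  set ψ' : Λ → ℤ := fun i => ψ i - 1
  change _ ≤ μ (addOne Λ ⁻¹' E ∩ cyl Λ ψ')
  -- The energy condition enters through the two conditional probabilities, which makes `W` an
  -- event in the outside σ-algebra.
  set W : Set Conf := glue Λ ψ ⁻¹' E ∩
    {ω | Real.exp (-β * K) * cylProb μ Λ ψ ω ≤ cylProb μ Λ ψ' ω}
  have hW : MeasurableSet[outsideSigma Λ] W :=
    MeasurableSet.inter (measurable_glue Λ ψ hE)
      (@measurableSet_le _ _ _ _ _ (outsideSigma Λ) _ _ _ _ _
        ((stronglyMeasurable_cylProb μ Λ ψ).measurable.const_mul _)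
        (stronglyMeasurable_cylProb μ Λ ψ').measurable)
  have h1 : μ (E ∩ cyl Λ ψ) ≤ μ (W ∩ cyl Λ ψ) := by
    refine measure_mono_ae ?_
    filter_upwards [hK, h.partZ_pos Λ, (h Λ).2 ψ, (h Λ).2 ψ'] with φ hφ hZ e e' ⟨hφE, hφc⟩
    refine ⟨⟨by simpa [glue_eq_self hφc] using hφE, ?_⟩, hφc⟩
    have e1 : cylProb μ Λ ψ φ = _ := e
    have e2 : cylProb μ Λ ψ' φ = _ := e'
    have hψ : (fun i : Λ => φ i) = ψ := funext hφc
    have hψ' : (fun i : Λ => φ i - 1) = ψ' := by funext i; rw [hφc i]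
    have hD := hφ hφE
    rw [hψ, hψ'] at hD
    simp only [Set.mem_ofPred_eq]
    rw [e1, e2, ← mul_div_assoc, ← Real.exp_add]
    gcongr
    nlinarith
  have h2 : W ∩ cyl Λ ψ' ⊆ addOne Λ ⁻¹' E ∩ cyl Λ ψ' := by
    rintro φ ⟨⟨h1, -⟩, h2⟩
    refine ⟨?_, h2⟩
    rw [Set.mem_preimage, ← glue_eq_addOne h2]
    exact h1
  have h3 : Real.exp (-β * K) * μ.real (W ∩ cyl Λ ψ) ≤ μ.real (W ∩ cyl Λ ψ') := by
    rw [← setIntegral_cylProb μ Λ ψ hW, ← setIntegral_cylProb μ Λ ψ' hW, ← integral_const_mul]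
    exact setIntegral_mono_on (integrable_condExp.const_mul _).integrableOn
      integrable_condExp.integrableOn (outsideSigma_le Λ _ hW) fun ω hω => hω.2
  calc ENNReal.ofReal (Real.exp (-β * K)) * μ (E ∩ cyl Λ ψ)
      ≤ ENNReal.ofReal (Real.exp (-β * K)) * μ (W ∩ cyl Λ ψ) := by gcongr
    _ = ENNReal.ofReal (Real.exp (-β * K) * μ.real (W ∩ cyl Λ ψ)) := by
        rw [ENNReal.ofReal_mul (Real.exp_pos _).le, ofReal_measureReal]
    _ ≤ ENNReal.ofReal (μ.real (W ∩ cyl Λ ψ')) := ENNReal.ofReal_le_ofReal h3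
    _ = μ (W ∩ cyl Λ ψ') := ofReal_measureReal
    _ ≤ _ := measure_mono h2

/-! ### The energy cost of raising an interval -/

/-- The quantity `1 + 2 |x|`; a sum of two such weights bounds the change of a single interaction
term when one height moves by one. -/
noncomputable def weight (x : ℤ) : ℝ≥0∞ := ENNReal.ofReal (1 + 2 * |(x : ℝ)|)

/-- A nonnegative, `[0, ∞]`-valued upper bound for the energy change caused by moving all the heights
in `Λ` by one: only the interactions between `Λ` and its complement contribute. -/
noncomputable def boundaryCost (J : ℤ → ℝ) (Λ : Finset ℤ) (φ : Conf) : ℝ≥0∞ :=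
  ∑ i : Λ, ∑' j : {j : ℤ // j ∉ Λ},
    ENNReal.ofReal |J ((i : ℤ) - (j : ℤ))| * (weight (φ i) + weight (φ j))

theorem measurable_weight : Measurable weight := measurable_of_countable _

theorem measurable_pairCost (J : ℤ → ℝ) (i j : ℤ) : Measurable fun φ : Conf =>
    ENNReal.ofReal |J (i - j)| * (weight (φ i) + weight (φ j)) :=
  ((measurable_weight.comp (measurable_pi_apply _)).add
    (measurable_weight.comp (measurable_pi_apply _))).const_mul _

theorem measurable_boundaryCost (J : ℤ → ℝ) (Λ : Finset ℤ) : Measurable (boundaryCost J Λ) :=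
  Finset.measurable_fun_sum _ fun i _ => Measurable.tsum fun j => measurable_pairCost J i j

theorem abs_rpow_sub_le {p : ℝ} (hp : p = 1 ∨ p = 2) (x y : ℝ) :
    |(|x - 1 - y| ^ p - |x - y| ^ p)| ≤ (1 + 2 * |x|) + (1 + 2 * |y|) := by
  have hxy : |x - y| ≤ |x| + |y| := abs_sub x y
  have hx := abs_nonneg x
  have hy := abs_nonneg y
  rcases hp with rfl | rfl
  · rw [Real.rpow_one, Real.rpow_one]
    have h1 : |(|x - 1 - y| - |x - y|)| ≤ |x - 1 - y - (x - y)| := abs_abs_sub_abs_le _ _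
    have h2 : x - 1 - y - (x - y) = -1 := by ring
    rw [h2, abs_neg, abs_one] at h1
    linarith
  · rw [Real.rpow_two, Real.rpow_two, sq_abs, sq_abs]
    have h1 : (x - 1 - y) ^ 2 - (x - y) ^ 2 = 1 - 2 * (x - y) := by ring
    rw [h1]
    rw [abs_le] at hxy ⊢
    constructor <;> linarith

theorem innerH_sub_one (J : ℤ → ℝ) (p : ℝ) (Λ : Finset ℤ) (ψ : Λ → ℤ) :
    innerH J p Λ (fun i => ψ i - 1) = innerH J p Λ ψ := by
  simp [innerH]

/-- The inner energy is unchanged when `Λ` is moved rigidly, and the boundary energy changes by at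
most `boundaryCost`. -/
theorem hamH_sub_le {p K : ℝ} (hp : p = 1 ∨ p = 2) (hK0 : 0 ≤ K) {J : ℤ → ℝ} {Λ : Finset ℤ}
    {φ : Conf}
    (hs : ∀ ψ : Λ → ℤ, ∀ i : Λ, Summable (fun j : {j : ℤ // j ∉ Λ} =>
      J ((i : ℤ) - (j : ℤ)) * |(ψ i : ℝ) - (φ (j : ℤ) : ℝ)| ^ p))
    (hK : boundaryCost J Λ φ ≤ ENNReal.ofReal K) :
    hamH J p Λ (fun i => φ i - 1) φ - hamH J p Λ (fun i => φ i) φ ≤ K := by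
  set w : Λ → {j : ℤ // j ∉ Λ} → ℝ := fun i j =>
    |J ((i : ℤ) - (j : ℤ))| * ((1 + 2 * |(φ i : ℝ)|) + (1 + 2 * |(φ j : ℝ)|)) with hw
  have hw0 : ∀ i j, 0 ≤ w i j := fun i j => by positivity
  have hcost : boundaryCost J Λ φ = ∑ i : Λ, ∑' j, ENNReal.ofReal (w i j) := by
    refine Finset.sum_congr rfl fun i _ => tsum_congr fun j => ?_
    rw [hw, ENNReal.ofReal_mul (abs_nonneg _), ENNReal.ofReal_add (by positivity) (by positivity)]
    rfl
  have hfin : ∀ i, ∑' j, ENNReal.ofReal (w i j) ≠ ∞ := fun i => by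
    have h : boundaryCost J Λ φ ≠ ∞ := (hK.trans_lt ENNReal.ofReal_lt_top).ne
    rw [hcost] at h
    exact ENNReal.sum_ne_top.1 h i (Finset.mem_univ i)
  have hwsum : ∀ i, Summable (w i) := fun i => by
    have h := ENNReal.summable_toReal (hfin i)
    simpa only [ENNReal.toReal_ofReal (hw0 i _)] using h
  have hsum : ∑ i, ∑' j, w i j ≤ K := by
    rw [hcost] at hK
    refine (ENNReal.ofReal_le_ofReal_iff hK0).1 (le_of_eq_of_le ?_ hK)
    rw [ENNReal.ofReal_sum_of_nonneg fun i _ => tsum_nonneg (hw0 i)]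
    exact Finset.sum_congr rfl fun i _ => ENNReal.ofReal_tsum_of_nonneg (hw0 i) (hwsum i)
  refine le_trans ?_ hsum
  rw [hamH, hamH, innerH_sub_one J p Λ (fun i => φ i), add_sub_add_left_eq_sub, crossH, crossH,
    ← Finset.sum_sub_distrib]
  refine Finset.sum_le_sum fun i _ => ?_
  have s1 : Summable fun j : {j : ℤ // j ∉ Λ} =>
    J ((i : ℤ) - j) * |((φ i - 1 : ℤ) : ℝ) - (φ j : ℝ)| ^ p := hs (fun i => φ i - 1) i
  have s2 : Summable fun j : {j : ℤ // j ∉ Λ} =>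
    J ((i : ℤ) - j) * |(φ i : ℝ) - (φ j : ℝ)| ^ p := hs (fun i => φ i) i
  rw [← s1.tsum_sub s2]
  refine (s1.sub s2).tsum_le_tsum (fun j => ?_) (hwsum i)
  rw [← mul_sub]
  refine (le_abs_self _).trans ?_
  rw [abs_mul]
  push_cast
  exact mul_le_mul_of_nonneg_left (abs_rpow_sub_le hp _ _) (abs_nonneg _)

/-- At most `|d|` sites of an interval leave it when displaced by `-d`. -/
theorem card_filter_sub_notMem_le (n : ℕ) (d : ℤ) :
    ((Finset.Ico (0 : ℤ) n).filter fun i => i - d ∉ Finset.Ico (0 : ℤ) n).card ≤ d.natAbs := by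
  have hsub : ((Finset.Ico (0 : ℤ) n).filter fun i => i - d ∉ Finset.Ico (0 : ℤ) n) ⊆
      Finset.Ico 0 d ∪ Finset.Ico (n + d) n := by
    intro i
    simp only [Finset.mem_filter, Finset.mem_Ico, Finset.mem_union]
    omega
  refine (Finset.card_le_card hsub).trans ((Finset.card_union_le _ _).trans ?_)
  simp only [Int.card_Ico]
  omega

/-- The total interaction across the boundary of an interval is bounded uniformly in its length. -/
theorem sum_tsum_boundary_le (a : ℤ → ℝ≥0∞) (n : ℕ) :
    ∑ i : Finset.Ico (0 : ℤ) n, ∑' j : {j : ℤ // j ∉ Finset.Ico (0 : ℤ) n}, a ((i : ℤ) - j)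
      ≤ ∑' d : ℤ, a d * d.natAbs := by
  set Λ := Finset.Ico (0 : ℤ) n
  have h1 : ∀ i : ℤ, ∑' j : {j : ℤ // j ∉ Λ}, a (i - j)
      = ∑' d : ℤ, if i - d ∉ Λ then a d else 0 := by
    intro i
    rw [← (Equiv.subLeft i).tsum_eq (fun d : ℤ => if i - d ∉ Λ then a d else 0)]
    refine (tsum_subtype {j : ℤ | j ∉ Λ} (fun j => a (i - j))).trans (tsum_congr fun j => ?_)
    simp [Set.indicator]
  rw [Finset.sum_coe_sort Λ (fun i : ℤ => ∑' j : {j : ℤ // j ∉ Λ}, a (i - j))]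
  simp only [h1]
  rw [← Summable.tsum_finsetSum fun _ _ => ENNReal.summable]
  refine ENNReal.tsum_le_tsum fun d => ?_
  rw [← Finset.sum_filter, Finset.sum_const, nsmul_eq_mul, mul_comm]
  gcongr
  exact card_filter_sub_notMem_le n d

/-- The hypothesis `α > 2` is exactly what makes `∑ |d| |d| ^ (-α)` converge. -/
theorem tsum_abs_mul_natAbs_lt_top {α C_J : ℝ} (hα : 2 < α) {J : ℤ → ℝ}
    (hJbound : ∀ k : ℤ, k ≠ 0 → |J k| ≤ C_J * |(k : ℝ)| ^ (-α)) :
    ∑' d : ℤ, ENNReal.ofReal |J d| * d.natAbs < ∞ := by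
  have hs : Summable fun d : ℤ => C_J * |(d : ℝ)| ^ (-(α - 1)) :=
    (Real.summable_abs_int_rpow (by linarith)).mul_left _
  refine lt_of_le_of_lt (ENNReal.tsum_le_tsum fun d => ?_) hs.tsum_ofReal_lt_top
  rcases eq_or_ne d 0 with rfl | hd
  · simp
  have hd' : 0 < |(d : ℝ)| := abs_pos.2 (Int.cast_ne_zero.2 hd)
  have hn : (d.natAbs : ℝ≥0∞) = ENNReal.ofReal |(d : ℝ)| := by
    rw [← ENNReal.ofReal_natCast, Nat.cast_natAbs, Int.cast_abs]
  rw [hn, ← ENNReal.ofReal_mul (abs_nonneg _)]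
  refine ENNReal.ofReal_le_ofReal ((mul_le_mul_of_nonneg_right (hJbound d hd) hd'.le).trans
    (le_of_eq ?_))
  rw [mul_assoc, neg_sub, sub_eq_neg_add, Real.rpow_add hd', Real.rpow_one]

theorem lintegral_boundaryCost_le {μ : Measure Conf} (hS : μ.map spatialShift = μ) (J : ℤ → ℝ)
    (n : ℕ) : ∫⁻ φ, boundaryCost J (Finset.Ico (0 : ℤ) n) φ ∂μ ≤
      (∑' d : ℤ, ENNReal.ofReal |J d| * d.natAbs) * (2 * ∫⁻ φ, weight (φ 0) ∂μ) := by
  set Q := ∫⁻ φ, weight (φ 0) ∂μ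
  have hwm : ∀ j : ℤ, Measurable fun φ : Conf => weight (φ j) := fun j =>
    measurable_weight.comp (measurable_pi_apply _)
  have hpair : ∀ i j : ℤ, ∫⁻ φ : Conf, ENNReal.ofReal |J (i - j)| * (weight (φ i) + weight (φ j)) ∂μ
      = ENNReal.ofReal |J (i - j)| * (2 * Q) := by
    intro i j
    rw [lintegral_const_mul' _ _ ENNReal.ofReal_ne_top, lintegral_add_left (hwm i),
      lintegral_coord hS measurable_weight i, lintegral_coord hS measurable_weight j, two_mul]
  unfold boundaryCost
  rw [lintegral_finsetSum]
  · refine le_trans (le_of_eq ?_) (mul_le_mul_left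
      (sum_tsum_boundary_le (fun d => ENNReal.ofReal |J d|) n) (2 * Q))
    rw [Finset.sum_mul]
    refine Finset.sum_congr rfl fun i _ => ?_
    rw [lintegral_tsum fun j : {j : ℤ // j ∉ Finset.Ico (0 : ℤ) n} =>
      (measurable_pairCost J i j).aemeasurable,
      ← ENNReal.tsum_mul_right]
    exact tsum_congr fun j => hpair i j
  · exact fun i _ => Measurable.tsum fun j => measurable_pairCost J i j

theorem lintegral_weight_lt_top {μ : Measure Conf} [IsProbabilityMeasure μ]
    (h : Integrable (fun φ : Conf => |(φ 0 : ℝ)|) μ) : ∫⁻ φ, weight (φ 0) ∂μ < ∞ :=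
  ((integrable_const (1 : ℝ)).add (h.const_mul 2)).lintegral_lt_top

/-! ### Separation of a configuration from its raised version -/

theorem freq_addOne (v : ℤ) (n : ℕ) (φ : Conf) :
    freq (v + 1) n (addOne (Finset.Ico (0 : ℤ) n) φ) = freq v n φ := by
  unfold freq
  congr 1
  refine Finset.sum_congr rfl fun k hk => ?_
  have hk' : (k : ℤ) ∈ Finset.Ico (0 : ℤ) n := by
    rw [Finset.mem_range] at hk
    rw [Finset.mem_Ico]; omega
  simp [addOne, hk']

/-- Frequencies change by `O(1 / N)` under a modification at `n` sites. -/
theorem abs_freq_addOne_sub_le (m : ℤ) (n N : ℕ) (φ : Conf) :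
    |freq m N (addOne (Finset.Ico (0 : ℤ) n) φ) - freq m N φ| ≤ (n : ℝ) / N := by
  unfold freq
  rw [← mul_sub, ← Finset.sum_sub_distrib, abs_mul, abs_of_nonneg (by positivity : 0 ≤ (N : ℝ)⁻¹),
    div_eq_inv_mul]
  refine mul_le_mul_of_nonneg_left ((Finset.abs_sum_le_sum_abs _ _).trans ?_) (by positivity)
  calc _ ≤ ∑ k ∈ Finset.range N, if k < n then (1 : ℝ) else 0 := by
        refine Finset.sum_le_sum fun k _ => ?_
        by_cases hk : k < n
        · rw [if_pos hk]
          split_ifs <;> norm_num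
        · simp [addOne, hk]
    _ ≤ n := by
        rw [← Finset.sum_filter, Finset.sum_const, nsmul_eq_mul, mul_one]
        have hsub : (Finset.range N).filter (fun k => k < n) ⊆ Finset.range n := by
          intro k; simp
        exact_mod_cast (Finset.card_le_card hsub).trans (Finset.card_range n).le

/-- The limiting frequencies are tail functions, almost surely: raising finitely many heights does
not affect them. -/
theorem IsGibbs.freqLimit_addOne {β p : ℝ} {J : ℤ → ℝ} {μ : Measure Conf}
    [IsProbabilityMeasure μ] (h : IsGibbs β J p μ) {m : ℤ} {N : ℕ → ℕ} (hN : StrictMono N)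
    {F : Conf → ℝ} (hF : Measurable F)
    (hlim : ∀ᵐ φ ∂μ, Tendsto (fun k => freq m (N k) φ) atTop (𝓝 (F φ))) (n : ℕ) :
    ∀ᵐ φ ∂μ, F (addOne (Finset.Ico (0 : ℤ) n) φ) = F φ := by
  set T := addOne (Finset.Ico (0 : ℤ) n)
  have hms : MeasurableSet {φ | Tendsto (fun k => freq m (N k) φ) atTop (𝓝 (F φ))} :=
    measurableSet_tendsto_fun (fun k => measurable_freq m (N k)) hF
  have hT : ∀ᵐ φ ∂μ, Tendsto (fun k => freq m (N k) (T φ)) atTop (𝓝 (F (T φ))) :=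
    h.measure_preimage_addOne_eq_zero _ hms.compl hlim
  filter_upwards [hlim, hT] with φ h1 h2
  have h3 : Tendsto (fun k => freq m (N k) (T φ) - freq m (N k) φ) atTop (𝓝 0) := by
    refine squeeze_zero_norm (fun k => abs_freq_addOne_sub_le m n (N k) φ) ?_
    exact tendsto_const_nhds.div_atTop (tendsto_natCast_atTop_atTop.comp hN.tendsto_atTop)
  exact sub_eq_zero.1 (tendsto_nhds_unique (h2.sub h1) h3)

theorem integral_freqLimit {μ : Measure Conf} [IsProbabilityMeasure μ]
    (hS : μ.map spatialShift = μ) {m : ℤ} {N : ℕ → ℕ} (hN : StrictMono N) {F : Conf → ℝ}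
    (hlim : ∀ᵐ φ ∂μ, Tendsto (fun k => freq m (N k) φ) atTop (𝓝 (F φ))) :
    ∫ φ, F φ ∂μ = μ.real {φ | m ≤ φ 0} := by
  have h := tendsto_integral_of_dominated_convergence (fun _ => (1 : ℝ))
    (fun k => (measurable_freq m (N k)).aestronglyMeasurable) (integrable_const 1)
    (fun k => ae_of_all _ fun φ => abs_freq_le m (N k) φ) hlim
  refine tendsto_nhds_unique h (tendsto_const_nhds.congr' ?_)
  filter_upwards [eventually_gt_atTop 0] with k hk
  exact (integral_freq hS m ((Nat.zero_le _).trans_lt (hN hk)).ne').symm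

theorem integrable_freqLimit {μ : Measure Conf} [IsProbabilityMeasure μ] {m : ℤ} {N : ℕ → ℕ}
    {F : Conf → ℝ} (hF : Measurable F)
    (hlim : ∀ᵐ φ ∂μ, Tendsto (fun k => freq m (N k) φ) atTop (𝓝 (F φ))) : Integrable F μ := by
  refine Integrable.of_bound hF.aestronglyMeasurable 1 ?_
  filter_upwards [hlim] with φ hφ
  exact le_of_tendsto hφ.norm (Eventually.of_forall fun k => abs_freq_le m (N k) φ)

theorem exists_coord_eq_pos (μ : Measure Conf) [IsProbabilityMeasure μ] :
    ∃ v : ℤ, 0 < μ {φ | φ 0 = v} := by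
  refine exists_measure_pos_of_not_measure_iUnion_null fun h => ?_
  have hu : (⋃ v : ℤ, {φ : Conf | φ 0 = v}) = Set.univ := by
    ext φ; simp
  rw [hu, measure_univ] at h
  exact one_ne_zero h

/-- The limiting frequency `F` of `{φ_i ≥ v + 1}` is smaller than the limiting frequency `F'` of
`{φ_i ≥ v}` with positive probability, as the means differ by `μ {φ 0 = v} > 0`. Hence some number
`b` lies strictly between them with positive probability. -/
theorem exists_separated_phases {μ : Measure Conf} [IsProbabilityMeasure μ]
    (hS : μ.map spatialShift = μ) :
    ∃ (v : ℤ) (b : ℝ) (N : ℕ → ℕ) (F F' : Conf → ℝ), StrictMono N ∧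
      Measurable F ∧ Measurable F' ∧
      (∀ᵐ φ ∂μ, Tendsto (fun k => freq (v + 1) (N k) φ) atTop (𝓝 (F φ))) ∧
      (∀ᵐ φ ∂μ, Tendsto (fun k => freq v (N k) φ) atTop (𝓝 (F' φ))) ∧
      0 < μ {φ | F φ < b ∧ b < F' φ} := by
  obtain ⟨v, hv⟩ := exists_coord_eq_pos μ
  obtain ⟨N, F, F', hN, hF, hF', hlim, hlim'⟩ := exists_freq_tendsto hS (v + 1) v
  have hlt : ∫ φ, F φ ∂μ < ∫ φ, F' φ ∂μ := by
    rw [integral_freqLimit hS hN hlim, integral_freqLimit hS hN hlim']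
    have hun : {φ : Conf | v ≤ φ 0} = {φ | v + 1 ≤ φ 0} ∪ {φ | φ 0 = v} := by
      ext φ
      simp only [Set.mem_union, Set.mem_ofPred_eq]
      omega
    have hd : Disjoint {φ : Conf | v + 1 ≤ φ 0} {φ | φ 0 = v} := by
      refine Set.disjoint_left.2 fun φ h1 h2 => ?_
      simp only [Set.mem_ofPred_eq] at h1 h2
      omega
    rw [hun, measureReal_union hd
      (measurableSet_eq_fun (measurable_pi_apply _) measurable_const)]
    have : 0 < μ.real {φ | φ 0 = v} := ENNReal.toReal_pos hv.ne' (measure_ne_top _ _)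
    linarith
  obtain ⟨q, hq⟩ : ∃ q : ℚ, 0 < μ {φ | F φ < q ∧ (q : ℝ) < F' φ} := by
    refine exists_measure_pos_of_not_measure_iUnion_null fun h0 => hlt.not_ge ?_
    refine integral_mono_ae (integrable_freqLimit hF' hlim') (integrable_freqLimit hF hlim) ?_
    filter_upwards [measure_eq_zero_iff_ae_notMem.1 h0] with φ hφ
    by_contra hc
    obtain ⟨q, h1, h2⟩ := exists_rat_btwn (not_le.1 hc)
    exact hφ (Set.mem_iUnion.2 ⟨q, h1, h2⟩)
  exact ⟨v, q, N, F, F', hN, hF, hF', hlim, hlim', hq⟩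

theorem tendsto_measure_zero_of_eventually_notMem {X : Type*} [MeasurableSpace X] {μ : Measure X}
    [IsFiniteMeasure μ] {A : ℕ → Set X} (hA : ∀ k, MeasurableSet (A k))
    (h : ∀ᵐ x ∂μ, ∀ᶠ k in atTop, x ∉ A k) : Tendsto (fun k => μ (A k)) atTop (𝓝 0) := by
  rw [← measure_empty (μ := μ)]
  refine tendsto_measure_of_ae_tendsto_indicator_of_isFiniteMeasure atTop MeasurableSet.empty hA ?_
  filter_upwards [h] with x hx
  filter_upwards [hx] with k hk
  simp [hk]

/-- The boundary costs of the intervals `[0, n)` are tight, by Markov's inequality and the uniform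
bound on their means. -/
theorem exists_level_boundaryCost {α C_J : ℝ} (hα : 2 < α) {J : ℤ → ℝ}
    (hJbound : ∀ k : ℤ, k ≠ 0 → |J k| ≤ C_J * |(k : ℝ)| ^ (-α))
    {μ : Measure Conf} [IsProbabilityMeasure μ] (hS : μ.map spatialShift = μ)
    (hloc : Integrable (fun φ : Conf => |(φ 0 : ℝ)|) μ) {ε : ℝ≥0∞} (hε : ε ≠ 0) :
    ∃ K : ℝ, 0 ≤ K ∧
      ∀ n : ℕ, μ {φ | ENNReal.ofReal K < boundaryCost J (Finset.Ico (0 : ℤ) n) φ} ≤ ε := by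
  set C := (∑' d : ℤ, ENNReal.ofReal |J d| * d.natAbs) * (2 * ∫⁻ φ, weight (φ 0) ∂μ)
  have hC : C ≠ ∞ := ENNReal.mul_ne_top (tsum_abs_mul_natAbs_lt_top hα hJbound).ne
    (ENNReal.mul_ne_top ENNReal.ofNat_ne_top (lintegral_weight_lt_top hloc).ne)
  have hK : 0 < (C / ε).toReal + 1 := by positivity
  refine ⟨(C / ε).toReal + 1, hK.le, fun n => ?_⟩
  have hle : C / ε ≤ ENNReal.ofReal ((C / ε).toReal + 1) := by
    conv_lhs => rw [← ENNReal.ofReal_toReal (ENNReal.div_ne_top hC hε)]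
    exact ENNReal.ofReal_le_ofReal (by linarith)
  refine (measure_mono fun φ hφ => (Set.mem_ofPred_eq.mp hφ).le).trans
    ((meas_ge_le_lintegral_div (measurable_boundaryCost J _).aemeasurable
      (ENNReal.ofReal_pos.2 hK).ne' ENNReal.ofReal_ne_top).trans ?_)
  refine ENNReal.div_le_of_le_mul ((lintegral_boundaryCost_le hS J n).trans ?_)
  have hmul := (ENNReal.div_le_iff_le_mul (Or.inl hε)
    (Or.inr (ENNReal.ofReal_pos.2 hK).ne')).1 hle
  exact hmul.trans_eq (mul_comm _ _)

/-- **Theorem 1, part (1)** (delocalisation of the long-range Discrete Gaussian Chain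
(`p = 2`) and SOS model (`p = 1`)): for every `β > 0`, `α > 2`, and even couplings `J` with
`|J(k)| ≤ C_J |k|^{-α}`, there is no shift-invariant Gibbs measure `μ` with
`∫ |φ_0| dμ < ∞`. -/
theorem delocalisation_DGC_SOS (β α p C_J : ℝ) (hβ : 0 < β) (hα : 2 < α)
    (hp : p = 1 ∨ p = 2) (hCJ : 0 < C_J) (J : ℤ → ℝ)
    (hJeven : ∀ k : ℤ, J (-k) = J k)
    (hJbound : ∀ k : ℤ, k ≠ 0 → |J k| ≤ C_J * |(k : ℝ)| ^ (-α)) :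
    ¬ ∃ μ : Measure Conf, IsProbabilityMeasure μ ∧
        μ.map spatialShift = μ ∧
        Integrable (fun φ : Conf => |(φ 0 : ℝ)|) μ ∧
        IsGibbs β J p μ := by
  rintro ⟨μ, hprob, hS, hloc, hG⟩
  obtain ⟨v, b, N, F, F', hN, hF, hF', hlim, hlim', hB⟩ := exists_separated_phases hS
  set B : Set Conf := {φ | F φ < b ∧ b < F' φ} with hBdef
  have hBm : MeasurableSet B :=
    (measurableSet_lt hF measurable_const).inter (measurableSet_lt measurable_const hF')
  obtain ⟨K, hK0, hK⟩ := exists_level_boundaryCost hα hJbound hS hloc (ENNReal.half_pos hB.ne').ne'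
  set Λ : ℕ → Finset ℤ := fun k => Finset.Ico (0 : ℤ) (N k)
  set P : ℕ → Set Conf := fun k => B ∩ {φ | b ≤ freq (v + 1) (N k) φ}
  set Q : ℕ → Set Conf := fun k => B ∩ {φ | freq v (N k) φ < b}
  set c : ℝ≥0∞ := ENNReal.ofReal (Real.exp (-β * K))
  -- On `B`, the frequency at level `v + 1` is eventually below `b` and the one at level `v` above.
  have hP : Tendsto (fun k => μ (P k)) atTop (𝓝 0) := by
    refine tendsto_measure_zero_of_eventually_notMem (fun k => hBm.inter
      (measurableSet_le measurable_const (measurable_freq _ _))) ?_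
    filter_upwards [hlim] with φ hφ
    by_cases hφB : φ ∈ B
    · filter_upwards [hφ.eventually_lt_const hφB.1] with k hk hmem
      exact (not_le.2 hk) hmem.2
    · exact Eventually.of_forall fun k hmem => hφB hmem.1
  have hQ : Tendsto (fun k => μ (Q k)) atTop (𝓝 0) := by
    refine tendsto_measure_zero_of_eventually_notMem (fun k => hBm.inter
      (measurableSet_lt (measurable_freq _ _) measurable_const)) ?_
    filter_upwards [hlim'] with φ hφ
    by_cases hφB : φ ∈ B
    · filter_upwards [hφ.eventually_const_lt hφB.2] with k hk hmem
      exact hk.not_gt hmem.2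
    · exact Eventually.of_forall fun k hmem => hφB hmem.1
  -- On most of `B` the frequency at level `v + 1` is below `b` at scale `N k`. Raising `[0, N k)`
  -- turns it into the frequency at level `v`, at the price of a factor `c`.
  have hkey : ∀ k, c * μ B ≤ μ (Q k) + c * μ (P k) + c * (μ B / 2) := by
    intro k
    set Y : Set Conf := {φ | ENNReal.ofReal K < boundaryCost J (Λ k) φ}
    set E : Set Conf := (B ∩ {φ | freq (v + 1) (N k) φ < b}) ∩ Yᶜ
    have hYm : MeasurableSet Y := measurableSet_lt measurable_const (measurable_boundaryCost J _)
    have hEm : MeasurableSet E :=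
      (hBm.inter (measurableSet_lt (measurable_freq _ _) measurable_const)).inter hYm.compl
    have hcover : B ⊆ E ∪ P k ∪ Y := by
      intro φ hφ
      by_cases hY : φ ∈ Y
      · exact Or.inr hY
      · rcases lt_or_ge (freq (v + 1) (N k) φ) b with h | h
        · exact Or.inl (Or.inl ⟨⟨hφ, h⟩, hY⟩)
        · exact Or.inl (Or.inr ⟨hφ, h⟩)
    have hmB : μ B ≤ μ E + μ (P k) + μ B / 2 :=
      (measure_mono hcover).trans ((measure_union_le _ _).trans
        (add_le_add (measure_union_le _ _) (hK (N k))))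
    have hmE : c * μ E ≤ μ (addOne (Λ k) ⁻¹' E) := by
      refine hG.exp_mul_measure_le hβ (Λ k) hEm ?_
      filter_upwards [(hG (Λ k)).1] with φ hφ hφE
      exact hamH_sub_le hp hK0 hφ.1 (not_lt.1 hφE.2)
    -- `B` is invariant under the surgery, since `F` and `F'` are tail functions.
    have hmQ : μ (addOne (Λ k) ⁻¹' E) ≤ μ (Q k) := by
      refine measure_mono_ae ?_
      filter_upwards [hG.freqLimit_addOne hN hF hlim (N k),
        hG.freqLimit_addOne hN hF' hlim' (N k)] with φ h1 h2 hφ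
      obtain ⟨⟨⟨h3, h4⟩, h5⟩, -⟩ := hφ
      rw [h1] at h3
      rw [h2] at h4
      rw [Set.mem_ofPred_eq, freq_addOne] at h5
      exact ⟨⟨h3, h4⟩, h5⟩
    calc c * μ B ≤ c * (μ E + μ (P k) + μ B / 2) := by gcongr
      _ = c * μ E + c * μ (P k) + c * (μ B / 2) := by ring
      _ ≤ _ := by gcongr; exact hmE.trans hmQ
  have hlimR : Tendsto (fun k => μ (Q k) + c * μ (P k) + c * (μ B / 2)) atTop
      (𝓝 (0 + c * 0 + c * (μ B / 2))) :=
    (hQ.add (ENNReal.Tendsto.const_mul hP (Or.inr ENNReal.ofReal_ne_top))).add tendsto_const_nhds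
  have hfin : c * μ B ≤ c * (μ B / 2) := by
    simpa using ge_of_tendsto' hlimR hkey
  have hc0 : c ≠ 0 := (ENNReal.ofReal_pos.2 (Real.exp_pos _)).ne'
  have hhalf : μ B ≤ μ B / 2 := (ENNReal.mul_le_mul_iff_right hc0 ENNReal.ofReal_ne_top).1 hfin
  exact (ENNReal.half_lt_self hB.ne' (measure_ne_top _ _)).not_ge hhalf
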